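/- Let γ be an irrational real number. There do not exist: a complex Hilbert space H; a star-algebra homomorphism π from the C*-algebra C₀(ℝ, ℂ) of continuous functions ℝ → ℂ vanishing at infinity (pointwise operations, supremum norm) to the bounded operators on H; a group homomorphism u from ℤ² to the unitary group of H satisfying the covariance relation u(n,m) π(f) u(n,m)⁻¹ = π(f(· − n − mγ)) for all f ∈ C₀(ℝ, ℂ) and (n,m) ∈ ℤ²; and an injective continuous linear map j : L¹(ℝ) → H such that j(f·η) = π(f)(j(η)) for every f ∈ C₀(ℝ, ℂ) and η ∈ L¹(ℝ) (pointwise product), and j(η(· − n − mγ)) = u(n,m)(j(η)) for every η ∈ L¹(ℝ) and (n,m) ∈ ℤ². -/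

import Mathlib

/-!
The obstruction comes from the action of `C₀(ℝ)`. If `f g = 0` in `C₀(ℝ)`, then
`π f v` and `π g v` are orthogonal, because `⟪π f v, π g v⟫ = ⟪v, π (f̄ g) v⟫`. Take
`η = 1_{[0,1]}` and cut it by the piecewise linear partition of unity `f_0, …, f_n` subordinate to
the mesh `1/n`. The vectors `v_k = π (f_k) (j η) = j (f_k η)` have norm at most `2‖j‖/n`, since
`f_k η` has `L¹`-norm at most `2/n`, and `v_k ⟂ v_l` unless `|k - l| ≤ 1`. Hence
`‖j η‖² = ‖∑ v_k‖² ≤ 3 (n + 1) (2‖j‖/n)²`, which tends to `0`. So `j η = 0` although `η ≠ 0`,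
contradicting injectivity.
-/

open MeasureTheory ZeroAtInfty

/-- The hat function of height one centred at `k / n`, supported in `[(k - 1) / n, (k + 1) / n]`. -/
noncomputable def hat (n k : ℕ) (x : ℝ) : ℝ := max 0 (1 - |n * x - k|)

lemma hat_nonneg (n k : ℕ) (x : ℝ) : 0 ≤ hat n k x := le_max_left _ _

lemma hat_le_one (n k : ℕ) (x : ℝ) : hat n k x ≤ 1 :=
  max_le zero_le_one (by linarith [abs_nonneg (n * x - k)])

lemma continuous_hat (n k : ℕ) : Continuous (hat n k) := by
  unfold hat
  fun_prop

lemma hat_eq_zero {n k : ℕ} {x : ℝ} (h : 1 ≤ |n * x - k|) : hat n k x = 0 :=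
  max_eq_left (by linarith)

lemma hat_eq_zero_of_notMem {n k : ℕ} (hn : 0 < n) {x : ℝ}
    (hx : x ∉ Set.Icc (((k : ℝ) - 1) / n) ((k + 1) / n)) : hat n k x = 0 := by
  have hn' : (0 : ℝ) < n := by exact_mod_cast hn
  apply hat_eq_zero
  by_contra! h
  rw [abs_lt] at h
  apply hx
  constructor
  · rw [div_le_iff₀ hn']; linarith
  · rw [le_div_iff₀ hn']; linarith

lemma hat_mul_hat {n k l : ℕ} (h : k + 2 ≤ l) (x : ℝ) : hat n k x * hat n l x = 0 := by
  have h' : (k : ℝ) + 2 ≤ l := by exact_mod_cast h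
  by_cases hx : n * x ≤ k + 1
  · rw [hat_eq_zero (k := l), mul_zero]
    rw [abs_of_nonpos (by linarith)]
    linarith
  · rw [hat_eq_zero (k := k), zero_mul]
    rw [abs_of_nonneg (by linarith)]
    linarith

/-- The partial sums of the hat functions are trapezoids on the positive half-line. -/
lemma sum_hat (n m : ℕ) {x : ℝ} (hx : 0 ≤ x) :
    ∑ k ∈ Finset.range (m + 1), hat n k x = min 1 (max 0 (m + 1 - n * x)) := by
  have hy : 0 ≤ (n : ℝ) * x := by positivity
  unfold hat
  generalize (n : ℝ) * x = y at hy
  induction m with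
  | zero =>
    simp [abs_of_nonneg hy, hy]
  | succ m ih =>
    rw [Finset.sum_range_succ, ih]
    push_cast
    have : (0 : ℝ) ≤ m := by positivity
    grind

lemma sum_hat_eq_one (n : ℕ) {x : ℝ} (hx : x ∈ Set.Icc (0 : ℝ) 1) :
    ∑ k ∈ Finset.range (n + 1), hat n k x = 1 := by
  rw [sum_hat n n hx.1]
  have : (n : ℝ) * x ≤ n := mul_le_of_le_one_right (by positivity) hx.2
  rw [max_eq_right (by linarith), min_eq_left (by linarith)]

/-- The hat function as an element of `C₀(ℝ, ℂ)`. -/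
noncomputable def hatC (n k : ℕ) (hn : 0 < n) : C₀(ℝ, ℂ) where
  toFun x := (hat n k x : ℂ)
  continuous_toFun := Complex.continuous_ofReal.comp (continuous_hat n k)
  zero_at_infty' := by
    apply HasCompactSupport.is_zero_at_infty
    apply HasCompactSupport.intro (K := Set.Icc (((k : ℝ) - 1) / n) ((k + 1) / n)) isCompact_Icc
    intro x hx
    rw [hat_eq_zero_of_notMem hn hx, Complex.ofReal_zero]

lemma hatC_apply (n k : ℕ) (hn : 0 < n) (x : ℝ) : hatC n k hn x = (hat n k x : ℂ) := rfl

/-- The indicator function of the unit interval, cut by the hat function. -/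
noncomputable def cutFun (n k : ℕ) (x : ℝ) : ℂ :=
  (Set.Icc (0 : ℝ) 1).indicator (fun x => (hat n k x : ℂ)) x

lemma norm_cutFun_le {n : ℕ} (hn : 0 < n) (k : ℕ) (x : ℝ) :
    ‖cutFun n k x‖ ≤
      ‖(Set.Icc (((k : ℝ) - 1) / n) ((k + 1) / n)).indicator (fun _ => (1 : ℂ)) x‖ := by
  have h : ‖cutFun n k x‖ ≤ hat n k x := by
    refine (norm_indicator_le_norm_self _ x).trans ?_
    rw [Complex.norm_real, Real.norm_of_nonneg (hat_nonneg n k x)]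
  by_cases hx : x ∈ Set.Icc (((k : ℝ) - 1) / n) ((k + 1) / n)
  · rw [Set.indicator_of_mem hx, norm_one]
    exact h.trans (hat_le_one n k x)
  · rw [hat_eq_zero_of_notMem hn hx] at h
    exact h.trans (norm_nonneg _)

lemma aestronglyMeasurable_cutFun (n k : ℕ) : AEStronglyMeasurable (cutFun n k) volume :=
  ((Complex.continuous_ofReal.comp (continuous_hat n k)).stronglyMeasurable.indicator
    measurableSet_Icc).aestronglyMeasurable

lemma eLpNorm_cutFun_le {n : ℕ} (hn : 0 < n) (k : ℕ) :
    eLpNorm (cutFun n k) 1 volume ≤ ENNReal.ofReal (2 / n) := by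
  refine (eLpNorm_mono (norm_cutFun_le hn k)).trans ?_
  rw [eLpNorm_indicator_const measurableSet_Icc one_ne_zero ENNReal.one_ne_top, Real.volume_Icc]
  have : ((k : ℝ) + 1) / n - (k - 1) / n = 2 / n := by ring
  simp [this]

lemma memLp_cutFun {n : ℕ} (hn : 0 < n) (k : ℕ) : MemLp (cutFun n k) 1 volume :=
  ⟨aestronglyMeasurable_cutFun n k, (eLpNorm_cutFun_le hn k).trans_lt ENNReal.ofReal_lt_top⟩

lemma norm_toLp_cutFun_le {n : ℕ} (hn : 0 < n) (k : ℕ) :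
    ‖(memLp_cutFun hn k).toLp‖ ≤ 2 / n := by
  rw [Lp.norm_toLp]
  exact ENNReal.toReal_le_of_le_ofReal (by positivity) (eLpNorm_cutFun_le hn k)

/-- The Gram matrix of the `v k` is tridiagonal, so expanding the square leaves at most three terms
per row, each of size at most `B ^ 2`. -/
lemma norm_sq_sum_le {H : Type*} [NormedAddCommGroup H] [InnerProductSpace ℂ H] (v : ℕ → H)
    (B : ℝ) (hB : ∀ k, ‖v k‖ ≤ B) (hv : ∀ k l, k + 2 ≤ l → inner ℂ (v k) (v l) = 0) (N : ℕ) :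
    ‖∑ k ∈ Finset.range N, v k‖ ^ 2 ≤ N * (3 * B ^ 2) := by
  have hB0 : 0 ≤ B := (norm_nonneg _).trans (hB 0)
  have hrow : ∀ k ∈ Finset.range N,
      ‖∑ l ∈ Finset.range N, inner ℂ (v k) (v l)‖ ≤ 3 * B ^ 2 := by
    intro k _
    have hpt : ∀ l ∈ Finset.range N, ‖inner ℂ (v k) (v l)‖ ≤
        if l ∈ ({k - 1, k, k + 1} : Finset ℕ) then B ^ 2 else 0 := by
      intro l _
      split_ifs with h
      · refine (norm_inner_le_norm _ _).trans ?_
        rw [sq]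
        exact mul_le_mul (hB k) (hB l) (norm_nonneg _) hB0
      · simp only [Finset.mem_insert, Finset.mem_singleton, not_or] at h
        rcases (by omega : k + 2 ≤ l ∨ l + 2 ≤ k) with h' | h'
        · simp [hv k l h']
        · simp [inner_eq_zero_symm.1 (hv l k h')]
    refine (norm_sum_le_of_le _ hpt).trans ?_
    rw [← Finset.sum_filter, Finset.sum_const, nsmul_eq_mul]
    gcongr
    have : (Finset.filter (fun l => l ∈ ({k - 1, k, k + 1} : Finset ℕ))
        (Finset.range N)).card ≤ 3 :=
      (Finset.card_le_card (fun l hl => (Finset.mem_filter.1 hl).2)).trans Finset.card_le_three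
    exact_mod_cast this
  calc ‖∑ k ∈ Finset.range N, v k‖ ^ 2
      = ‖inner ℂ (∑ k ∈ Finset.range N, v k) (∑ k ∈ Finset.range N, v k)‖ := by
        rw [inner_self_eq_norm_sq_to_K]
        simp
    _ = ‖∑ k ∈ Finset.range N, ∑ l ∈ Finset.range N, inner ℂ (v k) (v l)‖ := by
        rw [sum_inner]
        simp_rw [inner_sum]
    _ ≤ ∑ k ∈ Finset.range N, 3 * B ^ 2 := norm_sum_le_of_le _ hrow
    _ = N * (3 * B ^ 2) := by simp

lemma inner_rep_eq_zero {H : Type*} [NormedAddCommGroup H] [InnerProductSpace ℂ H]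
    [CompleteSpace H] (π : C₀(ℝ, ℂ) →⋆ₙₐ[ℂ] (H →L[ℂ] H)) {f g : C₀(ℝ, ℂ)}
    (hfg : star f * g = 0) (v : H) : inner ℂ (π f v) (π g v) = 0 := by
  rw [← ContinuousLinearMap.adjoint_inner_right, ← ContinuousLinearMap.star_eq_adjoint,
    ← map_star, ← mul_apply_eq_comp, ← map_mul, hfg, map_zero]
  simp

/-- ((ii) ⇒ (iii) of Theorem 5.3.)  For irrational `γ` there is no
star-representation of `C*(ℤ², ℝ)` (for the action of `ℤ²` on `ℝ` by translations by `1`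
and `γ`) — given by a covariant pair `(π, u)` on a Hilbert space `H` — containing the
`L¹(ℝ)`-module via an injective continuous linear map `j`. -/
theorem no_extension_of_L1_module_irrational_line (γ : ℝ) (hγ : Irrational γ)
    (H : Type) [NormedAddCommGroup H] [InnerProductSpace ℂ H] [CompleteSpace H]
    (π : C₀(ℝ, ℂ) →⋆ₙₐ[ℂ] (H →L[ℂ] H))
    (u : ℤ × ℤ → (H →L[ℂ] H))
    (hu_unitary : ∀ g, u g ∈ unitary (H →L[ℂ] H))
    (hu_one : u 0 = 1)
    (hu_hom : ∀ g g', u (g + g') = u g * u g')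
    (hcov : ∀ (nm : ℤ × ℤ) (f ψ : C₀(ℝ, ℂ)),
      (∀ t : ℝ, ψ t = f (t - (nm.1 : ℝ) - (nm.2 : ℝ) * γ)) →
        u nm * π f * star (u nm) = π ψ)
    (j : Lp ℂ 1 (volume : Measure ℝ) →L[ℂ] H)
    (hj_inj : Function.Injective j)
    (hj_mul : ∀ (f : C₀(ℝ, ℂ)) (η ψ : Lp ℂ 1 (volume : Measure ℝ)),
      (ψ : ℝ → ℂ) =ᵐ[volume] (fun t => f t * (η : ℝ → ℂ) t) → j ψ = π f (j η))
    (hj_shift : ∀ (nm : ℤ × ℤ) (η ψ : Lp ℂ 1 (volume : Measure ℝ)),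
      (ψ : ℝ → ℂ) =ᵐ[volume]
          (fun t : ℝ => (η : ℝ → ℂ) (t - (nm.1 : ℝ) - (nm.2 : ℝ) * γ)) →
        j ψ = u nm (j η)) :
    False := by
  have hfin : volume (Set.Icc (0 : ℝ) 1) ≠ ⊤ := by simp
  set η : Lp ℂ 1 (volume : Measure ℝ) := indicatorConstLp 1 measurableSet_Icc hfin (1 : ℂ) with hη
  have hηcoe : (η : ℝ → ℂ) =ᵐ[volume] (Set.Icc (0 : ℝ) 1).indicator fun _ => (1 : ℂ) :=
    indicatorConstLp_coeFn
  have hη0 : η ≠ 0 := by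
    intro h
    have h1 : ‖η‖ = 1 := by
      rw [hη, norm_indicatorConstLp one_ne_zero ENNReal.one_ne_top]
      simp
    rw [h, norm_zero] at h1
    exact zero_ne_one h1
  have hbound : ∀ n : ℕ, 0 < n → ‖j η‖ ^ 2 ≤ (n + 1 : ℕ) * (3 * (‖j‖ * (2 / n)) ^ 2) := by
    intro n hn
    have hcut : ∀ k, j (memLp_cutFun hn k).toLp = π (hatC n k hn) (j η) := by
      intro k
      apply hj_mul
      filter_upwards [(memLp_cutFun hn k).coeFn_toLp, hηcoe] with x h1 h2
      rw [h1, h2, hatC_apply, cutFun]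
      by_cases hx : x ∈ Set.Icc (0 : ℝ) 1 <;> simp [hx]
    have hsum : η = ∑ k ∈ Finset.range (n + 1), (memLp_cutFun hn k).toLp := by
      apply Lp.ext
      have hall : ∀ᵐ x ∂(volume : Measure ℝ), ∀ k,
          ((memLp_cutFun hn k).toLp : ℝ → ℂ) x = cutFun n k x :=
        ae_all_iff.2 fun k => (memLp_cutFun hn k).coeFn_toLp
      filter_upwards [hηcoe, hall, Lp.coeFn_finsetSum (Finset.range (n + 1))
        fun k => (memLp_cutFun hn k).toLp] with x h1 h2 h3
      rw [h1, h3, Finset.sum_apply]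
      simp_rw [h2, cutFun]
      by_cases hx : x ∈ Set.Icc (0 : ℝ) 1
      · simp only [Set.indicator_of_mem hx]
        rw [← Complex.ofReal_sum, sum_hat_eq_one n hx, Complex.ofReal_one]
      · simp only [Set.indicator_of_notMem hx, Finset.sum_const_zero]
    have hjsum : j η = ∑ k ∈ Finset.range (n + 1), j (memLp_cutFun hn k).toLp := by
      rw [← map_sum, ← hsum]
    rw [hjsum]
    have := norm_sq_sum_le (fun k => j (memLp_cutFun hn k).toLp) (‖j‖ * (2 / n))
      (fun k => (j.le_opNorm _).trans
        (mul_le_mul_of_nonneg_left (norm_toLp_cutFun_le hn k) (norm_nonneg _)))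
      (fun k l hkl => by
        simp only [hcut]
        apply inner_rep_eq_zero
        ext x
        simp only [ZeroAtInftyContinuousMap.mul_apply, ZeroAtInftyContinuousMap.star_apply,
          hatC_apply, ZeroAtInftyContinuousMap.zero_apply]
        rw [Complex.star_def, Complex.conj_ofReal, ← Complex.ofReal_mul, hat_mul_hat hkl,
          Complex.ofReal_zero]) (n + 1)
    exact this
  have hlim : ∀ m : ℕ, ‖j η‖ ^ 2 ≤ 24 * ‖j‖ ^ 2 * (1 / ((m : ℝ) + 1)) := by
    intro m
    refine (hbound (m + 1) m.succ_pos).trans ?_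
    have hm : (0 : ℝ) ≤ m := by positivity
    push_cast
    -- `n + 1 ≤ 2 n` for `n = m + 1`
    have h2 : (m : ℝ) + 1 + 1 ≤ 2 * (m + 1) := by linarith
    calc ((m : ℝ) + 1 + 1) * (3 * (‖j‖ * (2 / (m + 1))) ^ 2)
        ≤ (2 * (m + 1)) * (3 * (‖j‖ * (2 / (m + 1))) ^ 2) := by gcongr
      _ = 24 * ‖j‖ ^ 2 * (1 / ((m : ℝ) + 1)) := by field_simp; ring
  have hle : ‖j η‖ ^ 2 ≤ 24 * ‖j‖ ^ 2 * 0 :=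
    ge_of_tendsto' (tendsto_one_div_add_atTop_nhds_zero_nat.const_mul _) hlim
  have hj0 : j η = 0 := by
    rw [mul_zero] at hle
    exact norm_eq_zero.1 (pow_eq_zero_iff two_ne_zero |>.1 (le_antisymm hle (sq_nonneg _)))
  exact hη0 (hj_inj (hj0.trans (map_zero j).symm))
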